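/- There is no even polynomial B ∈ F₂[x] with gcd(B², σ(B²)) = 1 and no odd irreducible P₁ ∈ F₂[x] not dividing B such that A := B²·P₁ satisfies σ(A) = A. -/

import Mathlib

/-!
Since `P₁ ∤ B`, the sum of divisors of `B² P₁` factors as `σ(B²) (P₁ + 1)`
(`sigma_mul_irreducible`), so perfection reads `σ(B²) (P₁ + 1) = B² P₁`. As `P₁` is coprime to
`P₁ + 1`, it divides `σ(B²)`, say `σ(B²) = P₁ C`, and then `B² = C (P₁ + 1)`. Now `C` is a common
divisor of `B²` and `σ(B²)`, hence a unit, hence `1`. Therefore `P₁ = B² + 1 = (B + 1)²` in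
characteristic two, and a square is never irreducible.
-/

open Polynomial

/-- The sum of all divisors of a polynomial over `F₂` (junk value `0` when the
divisor set is infinite, i.e. for `A = 0`). -/
noncomputable def sigma (A : Polynomial (ZMod 2)) : Polynomial (ZMod 2) :=
  ∑ᶠ (D : Polynomial (ZMod 2)) (_ : D ∣ A), D

/-- A binary polynomial is odd if it evaluates to `1` at both `0` and `1`. -/
def IsOdd (B : Polynomial (ZMod 2)) : Prop := B.eval 0 = 1 ∧ B.eval 1 = 1

/-- A binary polynomial is even if it is not odd. -/
def IsEven (B : Polynomial (ZMod 2)) : Prop := ¬ IsOdd B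

theorem eq_one_of_isUnit {C : Polynomial (ZMod 2)} (h : IsUnit C) : C = 1 := by
  obtain ⟨r, hr, rfl⟩ := Polynomial.isUnit_iff.1 h
  have : ∀ r : ZMod 2, r ≠ 0 → r = 1 := by decide
  rw [this r hr.ne_zero, map_one]

theorem finite_divisors {M : Polynomial (ZMod 2)} (hM : M ≠ 0) : {D | D ∣ M}.Finite := by
  have : Subsingleton (Polynomial (ZMod 2))ˣ :=
    ⟨fun u v => Units.ext ((eq_one_of_isUnit u.isUnit).trans (eq_one_of_isUnit v.isUnit).symm)⟩
  have : Fintype (Polynomial (ZMod 2))ˣ := Fintype.ofFinite _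
  exact @Set.toFinite _ {D | D ∣ M}
    (@Finite.of_fintype _ (UniqueFactorizationMonoid.fintypeSubtypeDvd M hM))

/-- The divisors of `M * P` split into those of `M` and `P` times those of `M`. -/
theorem sigma_mul_irreducible {M P : Polynomial (ZMod 2)} (hM : M ≠ 0) (hP : Irreducible P)
    (hPM : ¬ P ∣ M) : sigma (M * P) = sigma M * (P + 1) := by
  have hfin := finite_divisors hM
  have hset : {D | D ∣ M * P} = {D | D ∣ M} ∪ (fun D => P * D) '' {D | D ∣ M} := by
    ext D
    simp only [Set.mem_ofPred_eq, Set.mem_union, Set.mem_image]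
    constructor
    · intro hD
      by_cases h : P ∣ D
      · obtain ⟨E, rfl⟩ := h
        rw [mul_comm M P] at hD
        exact Or.inr ⟨E, (mul_dvd_mul_iff_left hP.ne_zero).1 hD, rfl⟩
      · exact Or.inl ((hP.coprime_iff_not_dvd.2 h).symm.dvd_of_dvd_mul_right hD)
    · rintro (h | ⟨E, h, rfl⟩)
      · exact h.mul_right P
      · rw [mul_comm M P]
        exact mul_dvd_mul_left P h
  have hdisj : Disjoint {D | D ∣ M} ((fun D => P * D) '' {D | D ∣ M}) := by
    rw [Set.disjoint_left]
    rintro _ h ⟨E, -, rfl⟩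
    exact hPM ((dvd_mul_right P E).trans h)
  have hsig : ∀ A, sigma A = ∑ᶠ D ∈ {D | D ∣ A}, D := fun _ => rfl
  rw [hsig (M * P), hset, finsum_mem_union hdisj hfin (hfin.image _),
    finsum_mem_image ((mul_right_injective₀ hP.ne_zero).injOn), ← mul_finsum_mem (f := fun D => D) P, ← hsig M]
  ring

/-- Case `r = 1` of the main theorem: there is no even `B` with
`gcd(B², σ(B²)) = 1` and odd irreducible `P₁ ∤ B` such that `A = B² ⬝ P₁` is
perfect. -/
theorem statement1 :
    ¬ ∃ (B P₁ : Polynomial (ZMod 2)), IsEven B ∧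
      IsCoprime (B ^ 2) (sigma (B ^ 2)) ∧
      Irreducible P₁ ∧ IsOdd P₁ ∧ ¬ P₁ ∣ B ∧
      sigma (B ^ 2 * P₁) = B ^ 2 * P₁ := by
  rintro ⟨B, P, -, hcop, hP, -, hPB, hσ⟩
  have hB : B ≠ 0 := by
    rintro rfl
    exact hPB (dvd_zero P)
  rw [sigma_mul_irreducible (pow_ne_zero 2 hB) hP fun h => hPB (hP.prime.dvd_of_dvd_pow h)] at hσ
  have hPP : IsCoprime P (P + 1) := ⟨-1, 1, by ring⟩
  obtain ⟨C, hC⟩ : P ∣ sigma (B ^ 2) :=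
    hPP.dvd_of_dvd_mul_right (by rw [hσ]; exact dvd_mul_left P (B ^ 2))
  have hBC : B ^ 2 = C * (P + 1) :=
    mul_left_cancel₀ hP.ne_zero (by rw [mul_comm P, ← hσ, hC, mul_assoc])
  have hC1 : C = 1 :=
    eq_one_of_isUnit (hcop.isUnit_of_dvd' ⟨P + 1, hBC⟩ ⟨P, by rw [hC, mul_comm]⟩)
  rw [hC1, one_mul] at hBC
  have hsq : P = (B + 1) * (B + 1) := by
    rw [← sq, CharTwo.add_sq, hBC, one_pow, add_assoc, CharTwo.add_self_eq_zero, add_zero]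
  rcases hP.isUnit_or_isUnit hsq with h | h <;>
    exact hP.not_isUnit (by rw [hsq]; exact h.mul h)
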